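/- Let P be the R-measure. The set {(1/2, 7/(6√3)), (1/2, 1/(6√3))} is an optimal set of two-means for P, and the corresponding quantization error is V₂(P) = 5/54. -/

import Mathlib

open MeasureTheory ENNReal

noncomputable section

abbrev E2 : Type := EuclideanSpace ℝ (Fin 2)

/-- The point (a, b) of the Euclidean plane. -/
def pt (a b : ℝ) : E2 := (WithLp.equiv 2 (Fin 2 → ℝ)).symm ![a, b]

/-- S₁(x) = x/3. -/
def S1 : E2 → E2 := fun x => (3 : ℝ)⁻¹ • x

/-- S₂(x) = x/3 + (2/3, 0). -/
def S2 : E2 → E2 := fun x => (3 : ℝ)⁻¹ • x + pt (2/3) 0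

/-- S₃(x) = x/3 + (1/3, √3/3). -/
def S3 : E2 → E2 := fun x => (3 : ℝ)⁻¹ • x + pt (1/3) (Real.sqrt 3 / 3)

def Smap : Fin 3 → E2 → E2 := ![S1, S2, S3]

/-- For a word ω = ω₁⋯ω_k ∈ {1,2,3}^k, the composition S_ω = S_{ω₁} ∘ ⋯ ∘ S_{ω_k}. -/
def Sword {k : ℕ} (ω : Fin k → Fin 3) : E2 → E2 :=
  fun x => (List.ofFn fun i => Smap (ω i)).foldr (fun g y => g y) x

/-- The closed triangle with vertices (0,0), (1,0), (1/2, √3/2). -/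
def Tri : Set E2 := convexHull ℝ {pt 0 0, pt 1 0, pt (1/2) (Real.sqrt 3 / 2)}

/-- The distortion error ∫ min_{a ∈ α} ‖x − a‖² dμ of a set α of points. -/
def err (μ : Measure E2) (α : Set E2) : ℝ≥0∞ :=
  ∫⁻ x, ⨅ a ∈ α, ENNReal.ofReal (‖x - a‖ ^ 2) ∂μ

/-- The n-th quantization error V_n(μ). -/
def quantErr (μ : Measure E2) (n : ℕ) : ℝ≥0∞ :=
  ⨅ (α : Set E2) (_ : α.Finite ∧ α.ncard ≤ n), err μ α

/-- α is an optimal set of n-means for μ. -/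
def IsOptimal (μ : Measure E2) (n : ℕ) (α : Set E2) : Prop :=
  α.Finite ∧ α.ncard ≤ n ∧ err μ α = quantErr μ n

open scoped NNReal RealInnerProductSpace

/-!
Subtract the mean from the identity and call the result `X`. On each of the three pieces, `X` is a
copy of itself scaled by `r = 1/3` and displaced by `d i`.

Splitting the plane into a cell `A` and its complement, with any two centres, costs at least
`∫ ‖X‖² - C²` as soon as `‖∫_A X‖² ≤ C² t (1 - t)` for all `A`, where `t = P A`. When `r` is small,
any `C` with `∑ i, p i ⟪u, d i⟫² ≤ C² ‖u‖²` has this property. Indeed, let `t i` be the proportion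
of the `i`-th piece that lies in `A`. The displacements contribute at most `C √v` to `∫_A X`, where
`v` is the variance of the `t i`. The copies of `X` contribute at most `C w`, where `w` is the mean
of `t i (1 - t i)`; a crude a priori estimate is enough here, because of the factor `r`. Since
`v + w = t (1 - t) ≤ 1/4`, we have `√v + w ≤ √(v + w)`. For the R-measure `∫ ‖X‖² = 1/6` and
`C² = 2/27`.
-/

theorem sqrt_add_le_sqrt_add {v w : ℝ} (hv : 0 ≤ v) (hw : 0 ≤ w) (h : v + w ≤ 1 / 4) :
    √v + w ≤ √(v + w) := by
  have hroot : √v ≤ 1 / 2 - w := Real.sqrt_le_iff.2 ⟨by linarith, by nlinarith⟩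
  have hsum : 2 * √v + w ≤ 1 := by linarith
  refine Real.le_sqrt_of_sq_le ?_
  calc (√v + w) ^ 2 = v + w * (2 * √v + w) := by rw [add_sq, Real.sq_sqrt hv]; ring
    _ ≤ v + w := by gcongr; exact mul_le_of_le_one_right hw hsum

section SetMean

variable {Ω E : Type*} [MeasurableSpace Ω] [NormedAddCommGroup E] {P : Measure Ω} {X : Ω → E}
  {A : Set Ω}

theorem setIntegral_compl_eq_neg [NormedSpace ℝ E] (hX : Integrable X P)
    (hmean : ∫ ω, X ω ∂P = 0) (hA : MeasurableSet A) :
    ∫ ω in Aᶜ, X ω ∂P = -∫ ω in A, X ω ∂P := by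
  rw [eq_neg_iff_add_eq_zero, add_comm, integral_add_compl hA hX, hmean]

theorem norm_setIntegral_le_mul_min [NormedSpace ℝ E] [IsProbabilityMeasure P] {R : ℝ}
    (hX : Integrable X P) (hmean : ∫ ω, X ω ∂P = 0) (hbound : ∀ᵐ ω ∂P, ‖X ω‖ ≤ R)
    (hA : MeasurableSet A) :
    ‖∫ ω in A, X ω ∂P‖ ≤ R * min (P.real A) (1 - P.real A) := by
  have hle (B : Set Ω) : ‖∫ ω in B, X ω ∂P‖ ≤ R * P.real B :=
    norm_setIntegral_le_of_norm_le_const_ae' (measure_lt_top P B) (hbound.mono fun _ h _ => h)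
  rcases min_choice (P.real A) (1 - P.real A) with h | h <;> rw [h]
  · exact hle A
  · rw [← probReal_compl_eq_one_sub hA, ← norm_neg, ← setIntegral_compl_eq_neg hX hmean hA]
    exact hle Aᶜ

variable [InnerProductSpace ℝ E] [CompleteSpace E]

theorem integral_norm_sub_sq [IsFiniteMeasure P] (hX : MemLp X 2 P) (a : E) :
    ∫ ω, ‖X ω - a‖ ^ 2 ∂P =
      ∫ ω, ‖X ω‖ ^ 2 ∂P - 2 * ⟪∫ ω, X ω ∂P, a⟫ + P.real Set.univ * ‖a‖ ^ 2 := by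
  have hint : Integrable X P := hX.integrable one_le_two
  have hsq : Integrable (fun ω => ‖X ω‖ ^ 2) P := hX.integrable_norm_pow'
  have hinner : Integrable (fun ω => 2 * ⟪X ω, a⟫) P := (hint.inner_const a).const_mul 2
  have hinner_eq : ∫ ω, ⟪X ω, a⟫ ∂P = ⟪∫ ω, X ω ∂P, a⟫ := by
    simpa only [real_inner_comm] using integral_inner hint a
  simp_rw [norm_sub_sq_real]
  rw [integral_add (f := fun ω => ‖X ω‖ ^ 2 - 2 * ⟪X ω, a⟫) (hsq.sub hinner) (integrable_const _),
    integral_sub hsq hinner, integral_const_mul, hinner_eq, integral_const, smul_eq_mul]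

variable [IsProbabilityMeasure P]

theorem setIntegral_norm_sub_sq_add_compl (hX : MemLp X 2 P) (hmean : ∫ ω, X ω ∂P = 0)
    (hA : MeasurableSet A) (a b : E) :
    ∫ ω in A, ‖X ω - a‖ ^ 2 ∂P + ∫ ω in Aᶜ, ‖X ω - b‖ ^ 2 ∂P =
      ∫ ω, ‖X ω‖ ^ 2 ∂P - 2 * ⟪∫ ω in A, X ω ∂P, a - b⟫
        + (P.real A * ‖a‖ ^ 2 + (1 - P.real A) * ‖b‖ ^ 2) := by
  rw [integral_norm_sub_sq (hX.restrict A), integral_norm_sub_sq (hX.restrict Aᶜ),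
    setIntegral_compl_eq_neg (hX.integrable one_le_two) hmean hA,
    ← integral_add_compl hA hX.integrable_norm_pow', ← probReal_compl_eq_one_sub hA,
    measureReal_restrict_apply_univ, measureReal_restrict_apply_univ, inner_neg_left,
    inner_sub_right]
  ring

theorem norm_setIntegral_sq_le_of_integral_inner_sq_le {V : ℝ} (hX : MemLp X 2 P)
    (hmean : ∫ ω, X ω ∂P = 0) (hV0 : 0 ≤ V) (hV : ∀ u, ∫ ω, ⟪u, X ω⟫ ^ 2 ∂P ≤ V * ‖u‖ ^ 2)
    (hA : MeasurableSet A) :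
    ‖∫ ω in A, X ω ∂P‖ ^ 2 ≤ V * (P.real A * (1 - P.real A)) := by
  set t := P.real A with ht
  set D := ∫ ω in A, X ω ∂P with hD
  have hint : Integrable X P := hX.integrable one_le_two
  have hmeanD : ∫ ω, ⟪D, X ω⟫ ∂P = 0 := by rw [integral_inner hint, hmean, inner_zero_right]
  have hsetD : ∫ ω in A, ⟪D, X ω⟫ ∂P = ‖D‖ ^ 2 := by
    rw [integral_inner hint.integrableOn, ← hD, real_inner_self_eq_norm_sq]
  -- Cauchy–Schwarz for `⟪D, X⟫` against `1_A - t`, via the distance of the former to `c (1_A - t)`.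
  have hquad (c : ℝ) : 0 ≤ t * (1 - t) * (c * c) + -2 * ‖D‖ ^ 2 * c + V * ‖D‖ ^ 2 := by
    have hexpand := setIntegral_norm_sub_sq_add_compl (hX.const_inner D) hmeanD hA
      ((1 - t) * c) (-t * c)
    have hnonneg : 0 ≤ ∫ ω in A, ‖⟪D, X ω⟫ - (1 - t) * c‖ ^ 2 ∂P
      + ∫ ω in Aᶜ, ‖⟪D, X ω⟫ - -t * c‖ ^ 2 ∂P := by positivity
    rw [hexpand, hsetD] at hnonneg
    simp only [Real.norm_eq_abs, sq_abs, ← ht, Real.inner_apply] at hnonneg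
    linarith [hV D]
  have hdiscrim := discrim_le_zero hquad
  rw [discrim] at hdiscrim
  rcases (sq_nonneg ‖D‖).eq_or_lt' with hD0 | hD0
  · rw [hD0]
    exact mul_nonneg hV0 (mul_nonneg measureReal_nonneg (sub_nonneg.2 measureReal_le_one))
  · exact le_of_mul_le_mul_right (by linarith) hD0

theorem norm_setIntegral_le_mul_measureReal_mul {R V C : ℝ} (hX : MemLp X 2 P)
    (hmean : ∫ ω, X ω ∂P = 0) (hbound : ∀ᵐ ω ∂P, ‖X ω‖ ≤ R)
    (hV0 : 0 ≤ V) (hV : ∀ u, ∫ ω, ⟪u, X ω⟫ ^ 2 ∂P ≤ V * ‖u‖ ^ 2) (hC : 0 ≤ C)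
    (hRC : 2 * R ^ 2 ≤ C ^ 2) (hVC : 8 * V ≤ C ^ 2) (hA : MeasurableSet A) :
    ‖∫ ω in A, X ω ∂P‖ ≤ C * (P.real A * (1 - P.real A)) := by
  have hD := norm_setIntegral_le_mul_min (hX.integrable one_le_two) hmean hbound hA
  have hDV := norm_setIntegral_sq_le_of_integral_inner_sq_le hX hmean hV0 hV hA
  set m := min (P.real A) (1 - P.real A) with hm
  have hv : P.real A * (1 - P.real A) = m * (1 - m) := by
    rcases min_choice (P.real A) (1 - P.real A) with h | h <;> rw [hm, h]
    ring
  have hm0 : 0 ≤ m := le_min measureReal_nonneg (sub_nonneg.2 measureReal_le_one)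
  have hm_half : m ≤ 1 / 2 := by
    linarith [min_le_left (P.real A) (1 - P.real A), min_le_right (P.real A) (1 - P.real A)]
  have hv0 : 0 ≤ m * (1 - m) := mul_nonneg hm0 (by linarith)
  rw [hv] at hDV ⊢
  refine le_of_sq_le_sq ?_ (by positivity)
  -- The variance controls the cells of intermediate measure, the bound `R` the extreme ones.
  rcases le_total (1 / 8) (m * (1 - m)) with hbig | hsmall
  · calc _ ≤ V * (m * (1 - m)) := hDV
      _ ≤ 8 * V * (m * (1 - m)) ^ 2 := by
        nlinarith [mul_nonneg hV0 (mul_nonneg hv0 (sub_nonneg.2 hbig))]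
      _ ≤ (C * (m * (1 - m))) ^ 2 := by rw [mul_pow C]; gcongr
  · have hquarter : m ≤ 1 / 4 := by nlinarith
    have : 1 / 2 ≤ (1 - m) ^ 2 := by nlinarith
    calc _ ≤ (R * m) ^ 2 := by gcongr
      _ = R ^ 2 * m ^ 2 := by ring
      _ ≤ (2 * R ^ 2) * (1 - m) ^ 2 * m ^ 2 := by nlinarith [mul_nonneg (sq_nonneg R) (sq_nonneg m)]
      _ ≤ C ^ 2 * (1 - m) ^ 2 * m ^ 2 := by gcongr
      _ = _ := by ring

theorem integral_norm_sq_sub_le_add_compl {C : ℝ} (hX : MemLp X 2 P) (hmean : ∫ ω, X ω ∂P = 0)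
    (hA : MeasurableSet A) (hC : ‖∫ ω in A, X ω ∂P‖ ^ 2 ≤ C ^ 2 * (P.real A * (1 - P.real A)))
    (a b : E) :
    ∫ ω, ‖X ω‖ ^ 2 ∂P - C ^ 2 ≤
      ∫ ω in A, ‖X ω - a‖ ^ 2 ∂P + ∫ ω in Aᶜ, ‖X ω - b‖ ^ 2 ∂P := by
  set t := P.real A
  set D := ∫ ω in A, X ω ∂P
  have hconv : t * (1 - t) * ‖a - b‖ ^ 2 ≤ t * ‖a‖ ^ 2 + (1 - t) * ‖b‖ ^ 2 := by
    have h : 0 ≤ ‖t • a + (1 - t) • b‖ ^ 2 := by positivity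
    rw [norm_add_sq_real, norm_smul, norm_smul, real_inner_smul_left, real_inner_smul_right] at h
    rw [norm_sub_sq_real]
    simp only [mul_pow, Real.norm_eq_abs, sq_abs] at h
    linarith
  have hinner : 2 * ⟪D, a - b⟫ ≤ C ^ 2 + t * (1 - t) * ‖a - b‖ ^ 2 := by
    have ht0 : 0 ≤ t * (1 - t) := mul_nonneg measureReal_nonneg (sub_nonneg.2 measureReal_le_one)
    have hle : ⟪D, a - b⟫ ^ 2 ≤ C ^ 2 * (t * (1 - t) * ‖a - b‖ ^ 2) := by
      have := abs_real_inner_le_norm D (a - b)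
      calc _ = |⟪D, a - b⟫| ^ 2 := (sq_abs _).symm
        _ ≤ (‖D‖ * ‖a - b‖) ^ 2 := by gcongr
        _ ≤ _ := by rw [mul_pow, ← mul_assoc]; gcongr
    exact two_mul_le_add_of_sq_le_mul (by positivity) (by positivity) hle
  rw [setIntegral_norm_sub_sq_add_compl hX hmean hA]
  linarith

theorem integral_norm_sq_sub_le_integral_min {C : ℝ} (hXm : StronglyMeasurable X)
    (hX : MemLp X 2 P) (hmean : ∫ ω, X ω ∂P = 0)
    (hC : ∀ A, MeasurableSet A →
      ‖∫ ω in A, X ω ∂P‖ ^ 2 ≤ C ^ 2 * (P.real A * (1 - P.real A))) (a b : E) :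
    ∫ ω, ‖X ω‖ ^ 2 ∂P - C ^ 2 ≤ ∫ ω, min (‖X ω - a‖ ^ 2) (‖X ω - b‖ ^ 2) ∂P := by
  have hnorm (v : E) : Measurable fun ω => ‖X ω - v‖ :=
    (hXm.sub stronglyMeasurable_const).norm.measurable
  have hsq (v : E) : Integrable (fun ω => ‖X ω - v‖ ^ 2) P :=
    (hX.sub (memLp_const v)).integrable_norm_pow'
  set A : Set Ω := {ω | ‖X ω - a‖ ≤ ‖X ω - b‖}
  have hA : MeasurableSet A := measurableSet_le (hnorm a) (hnorm b)
  refine (integral_norm_sq_sub_le_add_compl hX hmean hA (hC A hA) a b).trans_eq ?_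
  rw [← integral_add_compl (f := fun ω => min (‖X ω - a‖ ^ 2) (‖X ω - b‖ ^ 2)) hA
      ((hsq a).inf (hsq b)),
    setIntegral_congr_fun hA fun ω (hω : ‖X ω - a‖ ≤ ‖X ω - b‖) =>
      min_eq_left (pow_le_pow_left₀ (norm_nonneg _) hω 2),
    setIntegral_congr_fun hA.compl fun ω (hω : ¬‖X ω - a‖ ≤ ‖X ω - b‖) =>
      min_eq_right (pow_le_pow_left₀ (norm_nonneg _) (not_le.1 hω).le 2)]

end SetMean

theorem sum_mul_sub_sq_add_sum_mul_mul_one_sub {ι R : Type*} [Fintype ι] [CommRing R]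
    {w s : ι → R} {t : R} (hw : ∑ i, w i = 1) (ht : ∑ i, w i * s i = t) :
    ∑ i, w i * (s i - t) ^ 2 + ∑ i, w i * (s i * (1 - s i)) = t * (1 - t) := by
  have hterm (i : ι) : w i * (s i - t) ^ 2 + w i * (s i * (1 - s i)) =
      (1 - 2 * t) * (w i * s i) + t ^ 2 * w i := by ring
  rw [← Finset.sum_add_distrib, Finset.sum_congr rfl fun i _ => hterm i, Finset.sum_add_distrib,
    ← Finset.mul_sum, ← Finset.mul_sum, hw, ht]
  ring

section FrameBound

variable {ι E : Type*} [Fintype ι] [NormedAddCommGroup E] [InnerProductSpace ℝ E] {p : ι → ℝ≥0}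
  {d : ι → E} {C : ℝ}

theorem norm_sum_smul_sq_le (hframe : ∀ u, ∑ i, p i * ⟪u, d i⟫ ^ 2 ≤ C ^ 2 * ‖u‖ ^ 2)
    (s : ι → ℝ) : ‖∑ i, (p i : ℝ) • s i • d i‖ ^ 2 ≤ C ^ 2 * ∑ i, p i * s i ^ 2 := by
  set v := ∑ i, (p i : ℝ) • s i • d i with hv
  have hself : ∑ i, p i * (s i * ⟪v, d i⟫) = ‖v‖ ^ 2 := by
    rw [← real_inner_self_eq_norm_sq]
    conv_rhs => rw [hv, inner_sum]
    simp_rw [real_inner_smul_right]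
    rfl
  have hcauchy : (‖v‖ ^ 2) ^ 2 ≤ (∑ i, p i * s i ^ 2) * ∑ i, p i * ⟪v, d i⟫ ^ 2 := by
    rw [← hself]
    exact Finset.sum_sq_le_sum_mul_sum_of_sq_le_mul _ (fun i _ => by positivity)
      (fun i _ => by positivity) fun i _ => le_of_eq (by ring)
  rcases (sq_nonneg ‖v‖).eq_or_lt' with hzero | hpos
  · rw [hzero]
    positivity
  · refine le_of_mul_le_mul_right ?_ hpos
    calc ‖v‖ ^ 2 * ‖v‖ ^ 2 = (‖v‖ ^ 2) ^ 2 := (sq _).symm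
      _ ≤ (∑ i, p i * s i ^ 2) * (C ^ 2 * ‖v‖ ^ 2) := hcauchy.trans (by gcongr; exact hframe v)
      _ = C ^ 2 * (∑ i, p i * s i ^ 2) * ‖v‖ ^ 2 := by ring

theorem norm_sum_smul_sq_le_sum_sub_sq (hd : ∑ i, (p i : ℝ) • d i = 0)
    (hframe : ∀ u, ∑ i, p i * ⟪u, d i⟫ ^ 2 ≤ C ^ 2 * ‖u‖ ^ 2) (s : ι → ℝ) (t : ℝ) :
    ‖∑ i, (p i : ℝ) • s i • d i‖ ^ 2 ≤ C ^ 2 * ∑ i, p i * (s i - t) ^ 2 := by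
  have hcenter : ∑ i, (p i : ℝ) • s i • d i = ∑ i, (p i : ℝ) • (s i - t) • d i := by
    simp_rw [sub_smul, smul_sub, Finset.sum_sub_distrib, smul_comm _ t, ← Finset.smul_sum, hd,
      smul_zero, sub_zero]
  rw [hcenter]
  exact norm_sum_smul_sq_le hframe _

end FrameBound

/-- `P` is an invariant measure of the iterated function system `S` with weights `p`. -/
structure IsInvariantMeasure {Ω ι : Type*} [MeasurableSpace Ω] [Fintype ι] (P : Measure Ω)
    (S : ι → Ω → Ω) (p : ι → ℝ≥0) : Prop where
  measurable : ∀ i, Measurable (S i)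
  eq_sum_map : P = ∑ i, p i • P.map (S i)

namespace IsInvariantMeasure

variable {Ω ι E : Type*} [MeasurableSpace Ω] [Fintype ι] [NormedAddCommGroup E] [NormedSpace ℝ E]
  {P : Measure Ω} {S : ι → Ω → Ω} {p : ι → ℝ≥0}

theorem integral_eq (h : IsInvariantMeasure P S p) {f : Ω → E} (hfm : StronglyMeasurable f)
    (hf : Integrable f P) : ∫ ω, f ω ∂P = ∑ i, (p i : ℝ) • ∫ ω, f (S i ω) ∂P := by
  have hf_map : ∀ i ∈ Finset.univ, Integrable f (p i • P.map (S i)) :=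
    integrable_finsetSum_measure.1 (h.eq_sum_map ▸ hf)
  conv_lhs => rw [h.eq_sum_map]
  rw [integral_finsetSum_measure hf_map]
  refine Finset.sum_congr rfl fun i _ => ?_
  rw [integral_smul_nnreal_measure, NNReal.smul_def,
    integral_map (h.measurable i).aemeasurable hfm.aestronglyMeasurable]

theorem setIntegral_eq (h : IsInvariantMeasure P S p) {f : Ω → E} (hfm : StronglyMeasurable f)
    (hf : Integrable f P) {A : Set Ω} (hA : MeasurableSet A) :
    ∫ ω in A, f ω ∂P = ∑ i, (p i : ℝ) • ∫ ω in S i ⁻¹' A, f (S i ω) ∂P := by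
  rw [← integral_indicator hA, h.integral_eq (hfm.indicator hA) (hf.indicator hA)]
  simp_rw [← integral_indicator (h.measurable _ hA)]
  rfl

variable [IsProbabilityMeasure P]

theorem measureReal_eq (h : IsInvariantMeasure P S p) {A : Set Ω} (hA : MeasurableSet A) :
    P.real A = ∑ i, p i * P.real (S i ⁻¹' A) := by
  simpa only [setIntegral_const, smul_eq_mul, mul_one] using
    h.setIntegral_eq (f := fun _ => (1 : ℝ)) stronglyMeasurable_const (integrable_const _) hA

theorem sum_weights_eq_one (h : IsInvariantMeasure P S p) : ∑ i, (p i : ℝ) = 1 := by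
  simpa using (h.measureReal_eq MeasurableSet.univ).symm

theorem ae_eq_zero_of_comp_le (h : IsInvariantMeasure P S p) {f : Ω → ℝ} {r : ℝ}
    (hfm : Measurable f) (hf : ∀ ω, 0 ≤ f ω) (hr : r < 1) (hS : ∀ i ω, f (S i ω) ≤ r * f ω) :
    ∀ᵐ ω ∂P, f ω = 0 := by
  -- `f` is not known to be integrable, so integrate the bounded function `arctan ∘ f` instead.
  have hint {g : Ω → ℝ} (hg : Measurable g) : Integrable (fun ω => Real.arctan (g ω)) P :=
    .of_bound (Real.continuous_arctan.measurable.comp hg).aestronglyMeasurable (Real.pi / 2)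
      (ae_of_all _ fun ω =>
        abs_le.2 ⟨(Real.neg_pi_div_two_lt_arctan _).le, (Real.arctan_lt_pi_div_two _).le⟩)
  have hle (ω : Ω) : Real.arctan (r * f ω) ≤ Real.arctan (f ω) :=
    Real.arctan_strictMono.monotone (mul_le_of_le_one_left (hf ω) hr.le)
  have hint_le : ∫ ω, Real.arctan (f ω) ∂P ≤ ∫ ω, Real.arctan (r * f ω) ∂P := by
    calc ∫ ω, Real.arctan (f ω) ∂P = ∑ i, (p i : ℝ) • ∫ ω, Real.arctan (f (S i ω)) ∂P :=
          h.integral_eq (Real.continuous_arctan.measurable.comp hfm).stronglyMeasurable (hint hfm)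
      _ ≤ ∑ i, (p i : ℝ) • ∫ ω, Real.arctan (r * f ω) ∂P := by
          gcongr with i
          · exact hint (hfm.comp (h.measurable i))
          · exact hint (hfm.const_mul r)
          · exact fun ω => Real.arctan_strictMono.monotone (hS i ω)
      _ = ∫ ω, Real.arctan (r * f ω) ∂P := by
          rw [← Finset.sum_smul, h.sum_weights_eq_one, one_smul]
  have hEq : (fun ω => Real.arctan (r * f ω)) =ᵐ[P] fun ω => Real.arctan (f ω) :=
    (integral_eq_iff_of_ae_le (hint (hfm.const_mul r)) (hint hfm) (ae_of_all _ hle)).1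
      ((integral_mono (hint (hfm.const_mul r)) (hint hfm) hle).antisymm hint_le)
  filter_upwards [hEq] with ω hω
  have : r * f ω = f ω := Real.arctan_injective hω
  exact (mul_eq_zero_iff_left (sub_ne_zero.2 hr.ne')).1 (by linarith : (1 - r) * f ω = 0)

end IsInvariantMeasure

/-- `X` is a centered random vector that reproduces itself under the iterated function system `S`:
on the `i`-th piece it is a copy of itself, contracted by `r` and displaced by `d i`. The weighted
displacements sum to zero. -/
structure IsSelfSimilarVector {Ω ι E : Type*} [MeasurableSpace Ω] [Fintype ι]
    [NormedAddCommGroup E] [NormedSpace ℝ E] (P : Measure Ω) (S : ι → Ω → Ω) (p : ι → ℝ≥0)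
    (X : Ω → E) (r : ℝ) (d : ι → E) : Prop extends IsInvariantMeasure P S p where
  stronglyMeasurable : StronglyMeasurable X
  comp_eq : ∀ i ω, X (S i ω) = r • X ω + d i
  sum_smul_eq_zero : ∑ i, (p i : ℝ) • d i = 0
  ratio_nonneg : 0 ≤ r
  ratio_lt_one : r < 1

namespace IsSelfSimilarVector

variable {Ω ι E : Type*} [MeasurableSpace Ω] [Fintype ι] [NormedAddCommGroup E]
  {P : Measure Ω} {S : ι → Ω → Ω} {p : ι → ℝ≥0} {X : Ω → E} {r : ℝ}
  {d : ι → E}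

theorem const_inner [InnerProductSpace ℝ E] (h : IsSelfSimilarVector P S p X r d) (u : E) :
    IsSelfSimilarVector P S p (fun ω => ⟪u, X ω⟫) r fun i => ⟪u, d i⟫ where
  toIsInvariantMeasure := h.toIsInvariantMeasure
  stronglyMeasurable := stronglyMeasurable_const.inner h.stronglyMeasurable
  comp_eq i ω := by rw [h.comp_eq, inner_add_right, real_inner_smul_right, smul_eq_mul]
  sum_smul_eq_zero := by
    simp_rw [smul_eq_mul, ← real_inner_smul_right, ← inner_sum, h.sum_smul_eq_zero,
      inner_zero_right]
  ratio_nonneg := h.ratio_nonneg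
  ratio_lt_one := h.ratio_lt_one

variable [IsProbabilityMeasure P]

section NormedSpace

variable [NormedSpace ℝ E]

theorem ae_norm_le (h : IsSelfSimilarVector P S p X r d) {δ : ℝ} (hd : ∀ i, ‖d i‖ ≤ δ) :
    ∀ᵐ ω ∂P, ‖X ω‖ ≤ δ / (1 - r) := by
  have hr := h.ratio_nonneg
  set ρ := δ / (1 - r)
  have hδ : δ = (1 - r) * ρ := (mul_div_cancel₀ δ (sub_pos.2 h.ratio_lt_one).ne').symm
  have hexcess (i : ι) (ω : Ω) : max (‖X (S i ω)‖ - ρ) 0 ≤ r * max (‖X ω‖ - ρ) 0 := by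
    have hnorm : ‖X (S i ω)‖ ≤ r * ‖X ω‖ + δ := by
      rw [h.comp_eq, ← Real.norm_of_nonneg hr, ← norm_smul, Real.norm_of_nonneg hr]
      exact (norm_add_le _ _).trans (by gcongr; exact hd i)
    refine max_le ?_ (by positivity)
    calc ‖X (S i ω)‖ - ρ ≤ r * (‖X ω‖ - ρ) := by linarith
      _ ≤ r * max (‖X ω‖ - ρ) 0 := by gcongr; exact le_max_left _ _
  filter_upwards [h.ae_eq_zero_of_comp_le
    ((h.stronglyMeasurable.norm.measurable.sub_const ρ).max measurable_const)
    (fun ω => le_max_right _ _) h.ratio_lt_one hexcess] with ω hω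
  exact sub_nonpos.1 (max_eq_right_iff.1 hω)

theorem memLp (h : IsSelfSimilarVector P S p X r d) (q : ℝ≥0∞) : MemLp X q P :=
  .of_bound h.stronglyMeasurable.aestronglyMeasurable _ <|
    h.ae_norm_le fun i => Finset.single_le_sum (fun j _ => norm_nonneg (d j)) (Finset.mem_univ i)

theorem memLp_comp (h : IsSelfSimilarVector P S p X r d) (i : ι) (q : ℝ≥0∞) :
    MemLp (fun ω => X (S i ω)) q P := by
  simp_rw [h.comp_eq]
  exact ((h.memLp q).const_smul r).add (memLp_const _)

theorem integrable (h : IsSelfSimilarVector P S p X r d) : Integrable X P :=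
  (h.memLp 1).integrable le_rfl

theorem integral_eq_zero [CompleteSpace E] (h : IsSelfSimilarVector P S p X r d) :
    ∫ ω, X ω ∂P = 0 := by
  have hsmul : Integrable (fun ω => r • X ω) P := h.integrable.smul r
  have hfix : ∫ ω, X ω ∂P = r • ∫ ω, X ω ∂P := by
    conv_lhs => rw [h.integral_eq h.stronglyMeasurable h.integrable]
    simp_rw [h.comp_eq, integral_add hsmul (integrable_const _), integral_smul, integral_const,
      probReal_univ, one_smul, smul_add, Finset.sum_add_distrib, h.sum_smul_eq_zero,
      ← Finset.sum_smul, h.sum_weights_eq_one, one_smul, add_zero]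
  have hzero : (1 - r) • ∫ ω, X ω ∂P = 0 := by rw [sub_smul, one_smul, ← hfix, sub_self]
  exact (smul_eq_zero.1 hzero).resolve_left (sub_pos.2 h.ratio_lt_one).ne'

theorem setIntegral_eq_sum [CompleteSpace E] (h : IsSelfSimilarVector P S p X r d) {A : Set Ω}
    (hA : MeasurableSet A) :
    ∫ ω in A, X ω ∂P = ∑ i, (p i : ℝ) • P.real (S i ⁻¹' A) • d i
      + ∑ i, (p i : ℝ) • ∫ ω in S i ⁻¹' A, r • X ω ∂P := by
  have hsmul : Integrable (fun ω => r • X ω) P := h.integrable.smul r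
  rw [h.setIntegral_eq h.stronglyMeasurable h.integrable hA, ← Finset.sum_add_distrib]
  refine Finset.sum_congr rfl fun i _ => ?_
  simp_rw [h.comp_eq]
  rw [integral_add hsmul.integrableOn (integrable_const _), setIntegral_const,
    ← smul_add, add_comm]

end NormedSpace

variable [InnerProductSpace ℝ E]

theorem integral_norm_comp_sub_sq [CompleteSpace E] (h : IsSelfSimilarVector P S p X r d)
    (i : ι) (a : E) :
    ∫ ω, ‖X (S i ω) - a‖ ^ 2 ∂P = r ^ 2 * ∫ ω, ‖X ω‖ ^ 2 ∂P + ‖d i - a‖ ^ 2 := by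
  have hsub (ω : Ω) : X (S i ω) - a = (r • X) ω - (a - d i) := by
    rw [h.comp_eq, Pi.smul_apply]; abel
  simp_rw [hsub]
  rw [integral_norm_sub_sq ((h.memLp 2).const_smul r), integral_congr_ae
    (ae_of_all _ fun ω => by rw [Pi.smul_apply, norm_smul, mul_pow, Real.norm_eq_abs, sq_abs]),
    integral_const_mul]
  simp_rw [Pi.smul_apply, integral_smul, h.integral_eq_zero, smul_zero, inner_zero_left,
    probReal_univ, norm_sub_rev a]
  ring

theorem one_sub_sq_mul_integral_norm_sq [CompleteSpace E] (h : IsSelfSimilarVector P S p X r d) :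
    (1 - r ^ 2) * ∫ ω, ‖X ω‖ ^ 2 ∂P = ∑ i, p i * ‖d i‖ ^ 2 := by
  have hcomp (i : ι) := h.integral_norm_comp_sub_sq i 0
  simp only [sub_zero] at hcomp
  have hself := h.integral_eq (f := fun ω => ‖X ω‖ ^ 2)
    (h.stronglyMeasurable.norm.pow 2) (h.memLp 2).integrable_norm_pow'
  simp_rw [hcomp, smul_eq_mul, mul_add, Finset.sum_add_distrib, ← Finset.sum_mul,
    h.sum_weights_eq_one, one_mul] at hself
  linarith

theorem one_sub_sq_mul_integral_inner_sq (h : IsSelfSimilarVector P S p X r d) (u : E) :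
    (1 - r ^ 2) * ∫ ω, ⟪u, X ω⟫ ^ 2 ∂P = ∑ i, p i * ⟪u, d i⟫ ^ 2 := by
  simpa only [Real.norm_eq_abs, sq_abs] using (h.const_inner u).one_sub_sq_mul_integral_norm_sq

variable [CompleteSpace E]

theorem norm_setIntegral_smul_le (h : IsSelfSimilarVector P S p X r d) {C δ : ℝ} (hC : 0 ≤ C)
    (hd : ∀ i, ‖d i‖ ≤ δ) (hframe : ∀ u, ∑ i, p i * ⟪u, d i⟫ ^ 2 ≤ C ^ 2 * ‖u‖ ^ 2)
    (hr : r ≤ 1 / 3) (hrδ : 2 * (r * δ) ^ 2 ≤ (C * (1 - r)) ^ 2) {A : Set Ω}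
    (hA : MeasurableSet A) :
    ‖∫ ω in A, r • X ω ∂P‖ ≤ C * (P.real A * (1 - P.real A)) := by
  have hr0 := h.ratio_nonneg
  have hr1 : 0 < 1 - r := sub_pos.2 h.ratio_lt_one
  have hr2 : 0 < 1 - r ^ 2 := by nlinarith
  refine norm_setIntegral_le_mul_measureReal_mul (R := r * (δ / (1 - r)))
    (V := r ^ 2 * (C ^ 2 / (1 - r ^ 2))) ((h.memLp 2).const_smul r) ?_ ?_ (by positivity) ?_ hC
    ?_ ?_ hA
  · simp_rw [integral_smul, h.integral_eq_zero, smul_zero]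
  · filter_upwards [h.ae_norm_le hd] with ω hω
    rw [norm_smul, Real.norm_of_nonneg hr0]
    gcongr
  · intro u
    have hu : ∫ ω, ⟪u, X ω⟫ ^ 2 ∂P ≤ C ^ 2 / (1 - r ^ 2) * ‖u‖ ^ 2 := by
      rw [div_mul_eq_mul_div, le_div_iff₀' hr2, h.one_sub_sq_mul_integral_inner_sq u]
      exact hframe u
    simp_rw [real_inner_smul_right, mul_pow, integral_const_mul, mul_assoc]
    gcongr
  · rw [← mul_div_assoc, div_pow, mul_div_assoc', div_le_iff₀ (by positivity), ← mul_pow]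
    exact hrδ
  · rw [← mul_div_assoc, mul_div_assoc', div_le_iff₀ hr2]
    nlinarith [mul_nonneg (sq_nonneg C) (by nlinarith : 0 ≤ 1 - 9 * r ^ 2)]

theorem norm_setIntegral_sq_le (h : IsSelfSimilarVector P S p X r d) {C δ : ℝ} (hC : 0 ≤ C)
    (hd : ∀ i, ‖d i‖ ≤ δ) (hframe : ∀ u, ∑ i, p i * ⟪u, d i⟫ ^ 2 ≤ C ^ 2 * ‖u‖ ^ 2)
    (hr : r ≤ 1 / 3) (hrδ : 2 * (r * δ) ^ 2 ≤ (C * (1 - r)) ^ 2) {A : Set Ω}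
    (hA : MeasurableSet A) :
    ‖∫ ω in A, X ω ∂P‖ ^ 2 ≤ C ^ 2 * (P.real A * (1 - P.real A)) := by
  set t := P.real A
  set s : ι → ℝ := fun i => P.real (S i ⁻¹' A)
  set between := ∑ i, p i * (s i - t) ^ 2
  set within := ∑ i, p i * (s i * (1 - s i)) with hwithin_def
  have hvar : between + within = t * (1 - t) :=
    sum_mul_sub_sq_add_sum_mul_mul_one_sub h.sum_weights_eq_one (h.measureReal_eq hA).symm
  have hwithin0 : 0 ≤ within := Finset.sum_nonneg fun i _ =>
    mul_nonneg (p i).2 (mul_nonneg measureReal_nonneg (sub_nonneg.2 measureReal_le_one))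
  have hbetween : ‖∑ i, (p i : ℝ) • s i • d i‖ ≤ C * √between := by
    refine le_of_sq_le_sq ?_ (by positivity)
    rw [mul_pow, Real.sq_sqrt (by positivity)]
    exact norm_sum_smul_sq_le_sum_sub_sq h.sum_smul_eq_zero hframe s t
  have hwithin : ‖∑ i, (p i : ℝ) • ∫ ω in S i ⁻¹' A, r • X ω ∂P‖ ≤ C * within := by
    rw [hwithin_def, Finset.mul_sum]
    refine norm_sum_le_of_le _ fun i _ => ?_
    rw [norm_smul, Real.norm_of_nonneg (NNReal.coe_nonneg _), mul_left_comm]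
    gcongr
    exact h.norm_setIntegral_smul_le hC hd hframe hr hrδ (h.measurable i hA)
  have hsqrt : √between + within ≤ √(t * (1 - t)) := by
    rw [← hvar]
    exact sqrt_add_le_sqrt_add (by positivity) hwithin0
      (by rw [hvar]; nlinarith [sq_nonneg (t - 1 / 2)])
  calc ‖∫ ω in A, X ω ∂P‖ ^ 2 ≤ (C * √between + C * within) ^ 2 := by
        rw [h.setIntegral_eq_sum hA]
        gcongr
        exact norm_add_le_of_le hbetween hwithin
    _ ≤ (C * √(t * (1 - t))) ^ 2 := by rw [← mul_add]; gcongr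
    _ = C ^ 2 * (t * (1 - t)) := by
      rw [mul_pow, Real.sq_sqrt (mul_nonneg measureReal_nonneg (sub_nonneg.2 measureReal_le_one))]

theorem integral_norm_sq_sub_sq_le_integral_min (h : IsSelfSimilarVector P S p X r d) {C δ : ℝ}
    (hC : 0 ≤ C) (hd : ∀ i, ‖d i‖ ≤ δ)
    (hframe : ∀ u, ∑ i, p i * ⟪u, d i⟫ ^ 2 ≤ C ^ 2 * ‖u‖ ^ 2) (hr : r ≤ 1 / 3)
    (hrδ : 2 * (r * δ) ^ 2 ≤ (C * (1 - r)) ^ 2) (a b : E) :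
    ∫ ω, ‖X ω‖ ^ 2 ∂P - C ^ 2 ≤ ∫ ω, min (‖X ω - a‖ ^ 2) (‖X ω - b‖ ^ 2) ∂P :=
  integral_norm_sq_sub_le_integral_min h.stronglyMeasurable (h.memLp 2) h.integral_eq_zero
    (fun _ hA => h.norm_setIntegral_sq_le hC hd hframe hr hrδ hA) a b

theorem integral_min_le (h : IsSelfSimilarVector P S p X r d) (a b : E) :
    ∫ ω, min (‖X ω - a‖ ^ 2) (‖X ω - b‖ ^ 2) ∂P ≤
      r ^ 2 * ∫ ω, ‖X ω‖ ^ 2 ∂P + ∑ i, p i * min (‖d i - a‖ ^ 2) (‖d i - b‖ ^ 2) := by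
  have hint {Y : Ω → E} (hY : MemLp Y 2 P) (v : E) : Integrable (fun ω => ‖Y ω - v‖ ^ 2) P :=
    (hY.sub (memLp_const v)).integrable_norm_pow'
  have hmeas (v : E) : StronglyMeasurable fun ω => ‖X ω - v‖ ^ 2 :=
    (h.stronglyMeasurable.sub stronglyMeasurable_const).norm.pow 2
  have hmin (i : ι) : ∫ ω, min (‖X (S i ω) - a‖ ^ 2) (‖X (S i ω) - b‖ ^ 2) ∂P ≤
      r ^ 2 * ∫ ω, ‖X ω‖ ^ 2 ∂P + min (‖d i - a‖ ^ 2) (‖d i - b‖ ^ 2) := by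
    have hX := h.memLp_comp i 2
    have hXmin := (hint hX a).inf (hint hX b)
    rw [← min_add_add_left, ← h.integral_norm_comp_sub_sq, ← h.integral_norm_comp_sub_sq]
    exact le_min (integral_mono hXmin (hint hX a) fun ω => min_le_left _ _)
      (integral_mono hXmin (hint hX b) fun ω => min_le_right _ _)
  calc _ = ∑ i, (p i : ℝ) • ∫ ω, min (‖X (S i ω) - a‖ ^ 2) (‖X (S i ω) - b‖ ^ 2) ∂P :=
        h.integral_eq ((hmeas a).inf (hmeas b)) ((hint (h.memLp 2) a).inf (hint (h.memLp 2) b))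
    _ ≤ ∑ i, (p i : ℝ) • (r ^ 2 * ∫ ω, ‖X ω‖ ^ 2 ∂P
        + min (‖d i - a‖ ^ 2) (‖d i - b‖ ^ 2)) := by gcongr with i; exact hmin i
    _ = _ := by
      simp_rw [smul_eq_mul, mul_add, Finset.sum_add_distrib, ← Finset.sum_mul,
        h.sum_weights_eq_one, one_mul]

end IsSelfSimilarVector

section Quantization

theorem exists_subset_pair_of_ncard_le_two {V : Type*} [Nonempty V] {α : Set V} (hα : α.Finite)
    (hcard : α.ncard ≤ 2) : ∃ a b, α ⊆ {a, b} := by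
  obtain ⟨v⟩ := ‹Nonempty V›
  have hcases : α.ncard = 0 ∨ α.ncard = 1 ∨ α.ncard = 2 := by omega
  rcases hcases with h | h | h
  · exact ⟨v, v, by simp [(Set.ncard_eq_zero hα).1 h]⟩
  · obtain ⟨a, rfl⟩ := Set.ncard_eq_one.1 h
    exact ⟨a, a, by simp⟩
  · obtain ⟨a, b, -, rfl⟩ := Set.ncard_eq_two.1 h
    exact ⟨a, b, subset_rfl⟩

variable {P : Measure E2}

theorem antitone_err : Antitone (err P) := fun _ _ hαβ => lintegral_mono fun _ => biInf_mono hαβ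

variable [IsFiniteMeasure P]

theorem err_pair (hP : MemLp id 2 P) (a b : E2) :
    err P {a, b} = ENNReal.ofReal (∫ x, min (‖x - a‖ ^ 2) (‖x - b‖ ^ 2) ∂P) := by
  have hsq (v : E2) : Integrable (fun x => ‖x - v‖ ^ 2) P :=
    (hP.sub (memLp_const v)).integrable_norm_pow'
  rw [ofReal_integral_eq_lintegral_ofReal (f := fun x => min (‖x - a‖ ^ 2) (‖x - b‖ ^ 2))
    ((hsq a).inf (hsq b))
    (ae_of_all _ fun x => le_min (sq_nonneg _) (sq_nonneg _))]
  simp only [err, iInf_pair, ENNReal.ofReal_min]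

theorem isOptimal_pair (hP : MemLp id 2 P) {a b : E2}
    (hab : ∀ a' b', ∫ x, min (‖x - a‖ ^ 2) (‖x - b‖ ^ 2) ∂P ≤
      ∫ x, min (‖x - a'‖ ^ 2) (‖x - b'‖ ^ 2) ∂P) : IsOptimal P 2 {a, b} := by
  have hcard : ({a, b} : Set E2).ncard ≤ 2 :=
    (Set.ncard_insert_le a {b}).trans (by rw [Set.ncard_singleton])
  refine ⟨Set.toFinite _, hcard, (le_iInf₂ fun α hα => ?_).antisymm
    (iInf₂_le _ ⟨Set.toFinite _, hcard⟩)⟩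
  obtain ⟨a', b', hsub⟩ := exists_subset_pair_of_ncard_le_two hα.1 hα.2
  calc err P {a, b} ≤ err P {a', b'} := by
        rw [err_pair hP, err_pair hP]
        exact ENNReal.ofReal_le_ofReal (hab a' b')
    _ ≤ err P α := antitone_err hsub

end Quantization

section RMeasure

/-- The centroid of the triangle spanned by the fixed points of the maps `Smap`; it is the mean of
the R-measure. -/
def centroid : E2 := pt (1 / 2) (√3 / 6)

/-- The vectors from the centroid of the triangle to its images under the maps `Smap`. -/
def displacement : Fin 3 → E2 :=
  ![pt (-1 / 3) (-√3 / 9), pt (1 / 3) (-√3 / 9), pt 0 (2 * √3 / 9)]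

theorem norm_pt_sq (a b : ℝ) : ‖pt a b‖ ^ 2 = a ^ 2 + b ^ 2 := by
  simp [EuclideanSpace.norm_sq_eq, pt]

theorem inner_pt (u : E2) (a b : ℝ) : ⟪u, pt a b⟫ = u 0 * a + u 1 * b := by
  simp [PiLp.inner_apply, pt, mul_comm]

theorem pt_sub_pt (a b a' b' : ℝ) : pt a b - pt a' b' = pt (a - a') (b - b') := by
  ext i; fin_cases i <;> simp [pt]

theorem pt_sub_centroid_eq_displacement :
    pt (1 / 2) (7 / (6 * √3)) - centroid = displacement 2 := by
  have h : 7 / (6 * √3) - √3 / 6 = 2 * √3 / 9 := by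
    field_simp
    norm_num
  rw [centroid, pt_sub_pt, h, sub_self]
  rfl

theorem pt_sub_centroid_eq_pt : pt (1 / 2) (1 / (6 * √3)) - centroid = pt 0 (-√3 / 9) := by
  have h : 1 / (6 * √3) - √3 / 6 = -√3 / 9 := by
    field_simp
    norm_num
  rw [centroid, pt_sub_pt, h, sub_self]

theorem Smap_sub_centroid (i : Fin 3) (x : E2) :
    Smap i x - centroid = (3 : ℝ)⁻¹ • (x - centroid) + displacement i := by
  ext j
  fin_cases i <;> fin_cases j <;>
    simp [Smap, S1, S2, S3, centroid, displacement, pt] <;> ring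

theorem sum_smul_displacement : ∑ i, ((3⁻¹ : ℝ≥0) : ℝ) • displacement i = 0 := by
  ext j
  fin_cases j <;> simp [Fin.sum_univ_three, displacement, pt] <;> ring

theorem norm_displacement_sq (i : Fin 3) : ‖displacement i‖ ^ 2 = 4 / 27 := by
  fin_cases i <;> norm_num [displacement, norm_pt_sq, div_pow, mul_pow]

theorem sum_mul_inner_displacement_sq (u : E2) :
    ∑ i, ((3⁻¹ : ℝ≥0) : ℝ) * ⟪u, displacement i⟫ ^ 2 = 2 / 27 * ‖u‖ ^ 2 := by
  have h3 : √3 ^ 2 = (3 : ℝ) := Real.sq_sqrt (by norm_num)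
  simp only [Fin.sum_univ_three, displacement, Matrix.cons_val, inner_pt,
    EuclideanSpace.norm_sq_eq, Fin.sum_univ_two, Real.norm_eq_abs, sq_abs, NNReal.coe_inv,
    NNReal.coe_ofNat]
  linear_combination (2 / 81 * u 1 ^ 2) * h3

variable {P : Measure E2}

theorem isInvariantMeasure_Smap (hP : P = (3 : ℝ≥0∞)⁻¹ • (P.map S1 + P.map S2 + P.map S3)) :
    IsInvariantMeasure P Smap fun _ => 3⁻¹ where
  measurable i := by
    have hSmap : Smap i = fun x => (3 : ℝ)⁻¹ • (x - centroid) + displacement i + centroid :=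
      funext fun x => sub_eq_iff_eq_add.1 (Smap_sub_centroid i x)
    rw [hSmap]
    fun_prop
  eq_sum_map := by
    rw [← Finset.smul_sum, Fin.sum_univ_three, ENNReal.smul_def, ENNReal.coe_inv three_ne_zero]
    exact hP

theorem isSelfSimilarVector_sub_centroid (h : IsInvariantMeasure P Smap fun _ => 3⁻¹) :
    IsSelfSimilarVector P Smap (fun _ => 3⁻¹) (fun x => x - centroid) 3⁻¹ displacement where
  toIsInvariantMeasure := h
  stronglyMeasurable := stronglyMeasurable_id.sub stronglyMeasurable_const
  comp_eq := Smap_sub_centroid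
  sum_smul_eq_zero := sum_smul_displacement
  ratio_nonneg := by norm_num
  ratio_lt_one := by norm_num

variable [IsProbabilityMeasure P]

theorem memLp_two_id (h : IsInvariantMeasure P Smap fun _ => 3⁻¹) : MemLp id 2 P := by
  have hX := ((isSelfSimilarVector_sub_centroid h).memLp 2).add (memLp_const centroid)
  exact hX.congr_norm measurable_id.aestronglyMeasurable (ae_of_all _ fun x => by simp)

theorem integral_norm_sub_centroid_sq (h : IsInvariantMeasure P Smap fun _ => 3⁻¹) :
    ∫ x, ‖x - centroid‖ ^ 2 ∂P = 1 / 6 := by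
  have hmoment := (isSelfSimilarVector_sub_centroid h).one_sub_sq_mul_integral_norm_sq
  simp only [norm_displacement_sq, Fin.sum_univ_three, NNReal.coe_inv, NNReal.coe_ofNat] at hmoment
  linarith

theorem le_integral_min_norm_sub_sq (h : IsInvariantMeasure P Smap fun _ => 3⁻¹) (a b : E2) :
    5 / 54 ≤ ∫ x, min (‖x - a‖ ^ 2) (‖x - b‖ ^ 2) ∂P := by
  have hX := isSelfSimilarVector_sub_centroid h
  have hC : √(2 / 27) ^ 2 = (2 / 27 : ℝ) := Real.sq_sqrt (by norm_num)
  have hδ : √(4 / 27) ^ 2 = (4 / 27 : ℝ) := Real.sq_sqrt (by norm_num)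
  have hlower := hX.integral_norm_sq_sub_sq_le_integral_min (Real.sqrt_nonneg (2 / 27))
    (fun i => Real.le_sqrt_of_sq_le (norm_displacement_sq i).le)
    (fun u => by rw [hC, sum_mul_inner_displacement_sq]) (by norm_num)
    (by rw [mul_pow, mul_pow, hC, hδ]; norm_num) (a - centroid) (b - centroid)
  simp only [sub_sub_sub_cancel_right] at hlower
  rw [integral_norm_sub_centroid_sq h, hC] at hlower
  linarith

theorem integral_min_norm_sub_sq_le (h : IsInvariantMeasure P Smap fun _ => 3⁻¹) :
    ∫ x, min (‖x - pt (1 / 2) (7 / (6 * √3))‖ ^ 2) (‖x - pt (1 / 2) (1 / (6 * √3))‖ ^ 2) ∂P ≤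
      5 / 54 := by
  have hupper := (isSelfSimilarVector_sub_centroid h).integral_min_le
    (pt (1 / 2) (7 / (6 * √3)) - centroid) (pt (1 / 2) (1 / (6 * √3)) - centroid)
  simp only [sub_sub_sub_cancel_right] at hupper
  rw [integral_norm_sub_centroid_sq h, pt_sub_centroid_eq_displacement, pt_sub_centroid_eq_pt,
    Fin.sum_univ_three, NNReal.coe_inv, NNReal.coe_ofNat] at hupper
  set b := pt 0 (-√3 / 9) with hb
  have h0 : min (‖displacement 0 - displacement 2‖ ^ 2) (‖displacement 0 - b‖ ^ 2) ≤ 1 / 9 :=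
    (min_le_right _ _).trans_eq (by norm_num [displacement, hb, pt_sub_pt, norm_pt_sq])
  have h1 : min (‖displacement 1 - displacement 2‖ ^ 2) (‖displacement 1 - b‖ ^ 2) ≤ 1 / 9 :=
    (min_le_right _ _).trans_eq (by norm_num [displacement, hb, pt_sub_pt, norm_pt_sq])
  have h2 : min (‖displacement 2 - displacement 2‖ ^ 2) (‖displacement 2 - b‖ ^ 2) ≤ 0 :=
    (min_le_left _ _).trans_eq (by norm_num)
  linarith

end RMeasure

/-- The set {(1/2, 7/(6√3)), (1/2, 1/(6√3))} is an optimal set of two-means for the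
R-measure P, with quantization error V₂(P) = 5/54. -/
theorem stmt_4 (P : Measure E2) [IsProbabilityMeasure P]
    (hP : P = (3 : ℝ≥0∞)⁻¹ • (P.map S1 + P.map S2 + P.map S3)) :
    IsOptimal P 2 {pt (1/2) (7 / (6 * Real.sqrt 3)), pt (1/2) (1 / (6 * Real.sqrt 3))}
      ∧ quantErr P 2 = 5 / 54 := by
  have hinv := isInvariantMeasure_Smap hP
  have hid := memLp_two_id hinv
  have hupper := integral_min_norm_sub_sq_le hinv
  have hlower := le_integral_min_norm_sub_sq hinv
  have hopt : IsOptimal P 2 {pt (1/2) (7 / (6 * √3)), pt (1/2) (1 / (6 * √3))} :=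
    isOptimal_pair hid fun a b => hupper.trans (hlower a b)
  refine ⟨hopt, ?_⟩
  rw [← hopt.2.2, err_pair hid, hupper.antisymm (hlower _ _),
    ENNReal.ofReal_div_of_pos (by norm_num)]
  norm_num

end
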